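/- arXiv:1101.1724 — 5 statements merged into one kernel-verified Lean document; each statement's English description precedes it below -/
import Mathlib

section
/- (Csaki–Vincze theorem.) For every n ∈ ℕ, |Ȳ_n − |S_n|| ≤ 2. (In particular, if S is a simple random walk then S̄ = T(S) is again a simple random walk whose reflected-at-maximum process Ȳ stays within distance 2 of |S|.) -/
noncomputable section

/-- The walk `S` associated with the sign sequence `X : {1,2,…} → {−1,1}`:
`S 0 = 0`, `S n = X 1 + ⋯ + X n`. -/
def cvWalk (X : ℕ → ℤ) (n : ℕ) : ℤ := ∑ j ∈ Finset.Icc 1 n, X j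

/-- The crossing times of `S`: `τ 0 = 0` and
`τ (l+1) = min {i > τ l : S (i-1) * S (i+1) < 0}`. -/
def cvTau (X : ℕ → ℤ) : ℕ → ℕ
  | 0 => 0
  | l + 1 => sInf {i : ℕ | cvTau X l < i ∧ cvWalk X (i - 1) * cvWalk X (i + 1) < 0}

/-- The increments of the Csaki–Vincze transform `S̄ = T(S)`:
`X̄ j = Σ_{l ≥ 0} (−1)^(l+1) · X 1 · X (j+1) · 1_{τ l + 1 ≤ j ≤ τ (l+1)}`
(the sum may be truncated to `l ≤ j` since `l ≤ τ l` whenever `τ l + 1 ≤ j`). -/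
def cvXbar (X : ℕ → ℤ) (j : ℕ) : ℤ :=
  ∑ l ∈ Finset.range (j + 1),
    (-1 : ℤ) ^ (l + 1) * X 1 * X (j + 1) *
      (if cvTau X l + 1 ≤ j ∧ j ≤ cvTau X (l + 1) then 1 else 0)

/-- The Csaki–Vincze transform `S̄ = T(S)`. -/
def cvSbar (X : ℕ → ℤ) (n : ℕ) : ℤ := ∑ j ∈ Finset.Icc 1 n, cvXbar X j

/-- `Ȳ`-type process of a walk `f`: `max_{0 ≤ k ≤ n} f k − f n`. -/
def cvYof (f : ℕ → ℤ) (n : ℕ) : ℤ :=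
  (Finset.range (n + 1)).sup' Finset.nonempty_range_add_one f - f n

/-- `Ȳ n = max_{0 ≤ k ≤ n} S̄ k − S̄ n`. -/
def cvYbar (X : ℕ → ℤ) (n : ℕ) : ℤ := cvYof (cvSbar X) n

/-!
Let `N n` be the number of crossings of `S` up to time `n`. At times `n` and `n + 1` the walk is on
the side of `0` given by the sign `(-1) ^ N n * S 1`, so this sign times `S (n + 1)` is
`|S (n + 1)|`. A discrete Tanaka formula then identifies the transform as
`S̄ n = 2 * N n + 1 - |S (n + 1)|`. At a crossing `S` is `0` and its next value is `±1`, so there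
`S̄ = 2 * N`; hence the running maximum of `S̄` is `2 * N n` or `2 * N n + 1`, and `Ȳ n` is
`|S (n + 1)|` or `|S (n + 1)| - 1`.
-/

section Crossings

/-- The walk `S` changes sign at time `i`. Time `0` is never a crossing of a walk started at `0`,
since `0 - 1 = 0` in `ℕ`. -/
def IsCrossing (S : ℕ → ℤ) (i : ℕ) : Prop := S (i - 1) * S (i + 1) < 0

instance (S : ℕ → ℤ) : DecidablePred (IsCrossing S) := fun i =>
  inferInstanceAs (Decidable (S (i - 1) * S (i + 1) < 0))

/-- The number of crossings of `S` at times `i ≤ n`. -/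
def crossingCount (S : ℕ → ℤ) (n : ℕ) : ℕ := Nat.count (IsCrossing S) (n + 1)

/-- The side of `0` (`1` for above, `-1` for below) on which a simple walk `S` started at `0` lies
at times `n` and `n + 1`: the side it takes first, flipped at each crossing. -/
def crossingSign (S : ℕ → ℤ) (n : ℕ) : ℤ := (-1) ^ crossingCount S n * S 1

/-- Closed form of the Csaki–Vincze transform of a walk `S`, through the number of crossings instead
of the crossing times `τ`. -/
def crossingTransform (S : ℕ → ℤ) (n : ℕ) : ℤ := 2 * crossingCount S n + 1 - |S (n + 1)|

variable {S : ℕ → ℤ} {n : ℕ}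

theorem abs_apply_one_eq_one (h0 : S 0 = 0) (hS : |S 1 - S 0| = 1) : |S 1| = 1 := by
  rwa [h0, sub_zero] at hS

theorem not_isCrossing_zero (h0 : S 0 = 0) : ¬ IsCrossing S 0 := by
  simp [IsCrossing, h0]

theorem IsCrossing.apply_eq_zero (hS : ∀ n, |S (n + 1) - S n| ≤ 1) (h : IsCrossing S (n + 1)) :
    S (n + 1) = 0 := by
  have h₁ := abs_le.1 (hS n)
  have h₂ := abs_le.1 (hS (n + 1))
  rcases mul_neg_iff.1 h with ⟨_, _⟩ | ⟨_, _⟩ <;> grind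

theorem IsCrossing.abs_apply_succ_eq_one (hS : ∀ n, |S (n + 1) - S n| = 1)
    (h : IsCrossing S (n + 1)) : |S (n + 2)| = 1 := by
  simpa [h.apply_eq_zero fun n => (hS n).le] using hS (n + 1)

theorem crossingCount_zero (h0 : S 0 = 0) : crossingCount S 0 = 0 := by
  simp [crossingCount, Nat.count_succ, not_isCrossing_zero h0]

theorem IsCrossing.crossingCount_succ (h : IsCrossing S (n + 1)) :
    crossingCount S (n + 1) = crossingCount S n + 1 :=
  Nat.count_succ_eq_succ_count_iff.2 h

theorem crossingCount_succ_of_not_isCrossing (h : ¬ IsCrossing S (n + 1)) :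
    crossingCount S (n + 1) = crossingCount S n :=
  Nat.count_succ_eq_count_iff.2 h

theorem crossingCount_mono (S : ℕ → ℤ) : Monotone (crossingCount S) := fun _ _ h =>
  Nat.count_monotone _ (Nat.succ_le_succ h)

theorem IsCrossing.crossingSign_succ (h : IsCrossing S (n + 1)) :
    crossingSign S (n + 1) = -crossingSign S n := by
  rw [crossingSign, crossingSign, h.crossingCount_succ]
  ring

theorem crossingSign_succ_of_not_isCrossing (h : ¬ IsCrossing S (n + 1)) :
    crossingSign S (n + 1) = crossingSign S n := by
  rw [crossingSign, crossingSign, crossingCount_succ_of_not_isCrossing h]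

theorem abs_crossingSign (h : |S 1| = 1) (n : ℕ) : |crossingSign S n| = 1 := by
  simp [crossingSign, abs_mul, h]

theorem crossingSign_mul_nonneg (h0 : S 0 = 0) (hS : ∀ n, |S (n + 1) - S n| = 1) (n : ℕ) :
    0 ≤ crossingSign S n * S n ∧ 0 ≤ crossingSign S n * S (n + 1) := by
  induction n with
  | zero => simp [crossingSign, crossingCount_zero h0, h0, mul_self_nonneg]
  | succ n ih =>
    have hsign : crossingSign S n = 1 ∨ crossingSign S n = -1 :=
      eq_or_eq_neg_of_abs_eq (abs_crossingSign (abs_apply_one_eq_one h0 (hS 0)) n)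
    have hstep := eq_or_eq_neg_of_abs_eq (hS n)
    by_cases hc : IsCrossing S (n + 1)
    · rw [hc.crossingSign_succ, hc.apply_eq_zero fun n => (hS n).le]
      rcases mul_neg_iff.1 hc with ⟨_, _⟩ | ⟨_, _⟩ <;> grind
    · rw [crossingSign_succ_of_not_isCrossing hc]
      refine ⟨ih.2, ?_⟩
      have hstep' := eq_or_eq_neg_of_abs_eq (hS (n + 1))
      have hsame : 0 ≤ S n * S (n + 2) := not_lt.1 hc
      rcases mul_nonneg_iff.1 hsame with ⟨_, _⟩ | ⟨_, _⟩ <;> grind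

theorem crossingSign_mul_apply_succ (h0 : S 0 = 0) (hS : ∀ n, |S (n + 1) - S n| = 1) (n : ℕ) :
    crossingSign S n * S (n + 1) = |S (n + 1)| := by
  rw [← abs_of_nonneg (crossingSign_mul_nonneg h0 hS n).2, abs_mul,
    abs_crossingSign (abs_apply_one_eq_one h0 (hS 0)), one_mul]

theorem crossingTransform_zero (h0 : S 0 = 0) (hS : |S 1 - S 0| = 1) :
    crossingTransform S 0 = 0 := by
  simp [crossingTransform, crossingCount_zero h0, abs_apply_one_eq_one h0 hS]

/-- A discrete Tanaka formula: at a crossing the count absorbs the change of sign. -/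
theorem crossingTransform_succ (h0 : S 0 = 0) (hS : ∀ n, |S (n + 1) - S n| = 1) (n : ℕ) :
    crossingTransform S (n + 1) =
      crossingTransform S n - crossingSign S n * (S (n + 2) - S (n + 1)) := by
  have habs := crossingSign_mul_apply_succ h0 hS
  rw [crossingTransform, crossingTransform, ← habs, ← habs]
  by_cases hc : IsCrossing S (n + 1)
  · have hnext : -crossingSign S n * S (n + 2) = 1 := by
      rw [← hc.crossingSign_succ, habs, hc.abs_apply_succ_eq_one hS]
    rw [hc.crossingCount_succ, hc.crossingSign_succ, hc.apply_eq_zero fun n => (hS n).le]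
    push_cast
    linear_combination -2 * hnext
  · rw [crossingCount_succ_of_not_isCrossing hc, crossingSign_succ_of_not_isCrossing hc]
    ring

theorem exists_crossingTransform_eq_two_mul_crossingCount (h0 : S 0 = 0)
    (hS : ∀ n, |S (n + 1) - S n| = 1) (n : ℕ) :
    ∃ k ≤ n, crossingTransform S k = 2 * crossingCount S n := by
  induction n with
  | zero =>
    exact ⟨0, le_rfl, by simp [crossingTransform_zero h0 (hS 0), crossingCount_zero h0]⟩
  | succ n ih =>
    by_cases hc : IsCrossing S (n + 1)
    · exact ⟨n + 1, le_rfl, by rw [crossingTransform, hc.abs_apply_succ_eq_one hS]; ring⟩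
    · obtain ⟨k, hk, hk'⟩ := ih
      exact ⟨k, hk.trans n.le_succ, by rw [hk', crossingCount_succ_of_not_isCrossing hc]⟩

theorem cvYof_crossingTransform_le (S : ℕ → ℤ) (n : ℕ) :
    cvYof (crossingTransform S) n ≤ |S (n + 1)| := by
  have hmax : (Finset.range (n + 1)).sup' Finset.nonempty_range_add_one (crossingTransform S) ≤
      2 * crossingCount S n + 1 := by
    refine Finset.sup'_le _ _ fun k hk => ?_
    have hcount := crossingCount_mono S (Finset.mem_range_succ_iff.1 hk)
    have habs := abs_nonneg (S (k + 1))
    rw [crossingTransform]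
    omega
  rw [cvYof, sub_le_iff_le_add]
  exact hmax.trans_eq (by rw [crossingTransform]; ring)

theorem abs_sub_one_le_cvYof_crossingTransform (h0 : S 0 = 0) (hS : ∀ n, |S (n + 1) - S n| = 1)
    (n : ℕ) : |S (n + 1)| - 1 ≤ cvYof (crossingTransform S) n := by
  obtain ⟨k, hk, hk'⟩ := exists_crossingTransform_eq_two_mul_crossingCount h0 hS n
  have hmax : 2 * (crossingCount S n : ℤ) ≤
      (Finset.range (n + 1)).sup' Finset.nonempty_range_add_one (crossingTransform S) :=
    Finset.le_sup'_of_le _ (Finset.mem_range_succ_iff.2 hk) hk'.ge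
  rw [cvYof, le_sub_iff_add_le]
  exact hmax.trans_eq' (by rw [crossingTransform]; ring)

end Crossings

section Transform

variable {X : ℕ → ℤ}

theorem cvWalk_zero (X : ℕ → ℤ) : cvWalk X 0 = 0 := by simp [cvWalk]

theorem cvWalk_one (X : ℕ → ℤ) : cvWalk X 1 = X 1 := by simp [cvWalk]

theorem cvWalk_succ (X : ℕ → ℤ) (n : ℕ) : cvWalk X (n + 1) = cvWalk X n + X (n + 1) :=
  Finset.sum_Icc_succ_top (by simp) X

theorem cvSbar_zero (X : ℕ → ℤ) : cvSbar X 0 = 0 := by simp [cvSbar]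

theorem cvSbar_succ (X : ℕ → ℤ) (n : ℕ) : cvSbar X (n + 1) = cvSbar X n + cvXbar X (n + 1) :=
  Finset.sum_Icc_succ_top (by simp) (cvXbar X)

theorem abs_cvWalk_succ_sub (hX : ∀ j, 1 ≤ j → X j = 1 ∨ X j = -1) (n : ℕ) :
    |cvWalk X (n + 1) - cvWalk X n| = 1 := by
  rw [cvWalk_succ, add_sub_cancel_left, abs_eq zero_le_one]
  exact hX (n + 1) n.succ_pos

theorem cvTau_succ_eq_nth (hinf : {i | IsCrossing (cvWalk X) i}.Infinite) (l : ℕ) :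
    cvTau X (l + 1) = Nat.nth (IsCrossing (cvWalk X)) l := by
  rw [Nat.nth_eq_sInf, cvTau]
  congr 1
  ext i
  change cvTau X l < i ∧ IsCrossing (cvWalk X) i ↔ IsCrossing (cvWalk X) i ∧ _
  rw [and_comm]
  refine and_congr_right fun hi => ?_
  cases l with
  | zero =>
    have hpos : i ≠ 0 := by
      rintro rfl
      exact not_isCrossing_zero (cvWalk_zero X) hi
    simpa [cvTau] using Nat.pos_of_ne_zero hpos
  | succ l =>
    rw [cvTau_succ_eq_nth hinf l]
    exact ⟨fun h k hk => (Nat.nth_monotone hinf (Nat.lt_succ_iff.1 hk)).trans_lt h,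
      fun h => h l l.lt_succ_self⟩

theorem cvTau_le_and_lt_iff (hinf : {i | IsCrossing (cvWalk X) i}.Infinite) (l n : ℕ) :
    cvTau X l ≤ n ∧ n < cvTau X (l + 1) ↔ l = crossingCount (cvWalk X) n := by
  have hlt : n < cvTau X (l + 1) ↔ crossingCount (cvWalk X) n ≤ l := by
    rw [cvTau_succ_eq_nth hinf]
    exact (Nat.count_le_iff_le_nth hinf).symm
  have hle : cvTau X l ≤ n ↔ l ≤ crossingCount (cvWalk X) n := by
    cases l with
    | zero => simp [cvTau]
    | succ l =>
      rw [cvTau_succ_eq_nth hinf, ← Nat.lt_succ_iff]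
      exact (Nat.lt_nth_iff_count_lt hinf).symm
  rw [hlt, hle, le_antisymm_iff]

theorem cvXbar_succ (hinf : {i | IsCrossing (cvWalk X) i}.Infinite) (n : ℕ) :
    cvXbar X (n + 1) = -crossingSign (cvWalk X) n * X (n + 2) := by
  have hmem : crossingCount (cvWalk X) n ∈ Finset.range (n + 2) :=
    Finset.mem_range_succ_iff.2 (Nat.count_le _)
  have hblock (l : ℕ) : cvTau X l + 1 ≤ n + 1 ∧ n + 1 ≤ cvTau X (l + 1) ↔
      l = crossingCount (cvWalk X) n := by
    rw [Nat.add_le_add_iff_right, Nat.succ_le_iff, cvTau_le_and_lt_iff hinf]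
  simp only [cvXbar, hblock, mul_ite, mul_one, mul_zero, Finset.sum_ite_eq', hmem, if_true,
    crossingSign, cvWalk_one]
  ring

theorem cvSbar_eq_crossingTransform (hX : ∀ j, 1 ≤ j → X j = 1 ∨ X j = -1)
    (hinf : {i | IsCrossing (cvWalk X) i}.Infinite) :
    cvSbar X = crossingTransform (cvWalk X) := by
  have h0 := cvWalk_zero X
  have hS := abs_cvWalk_succ_sub hX
  funext n
  induction n with
  | zero => rw [cvSbar_zero, crossingTransform_zero h0 (hS 0)]
  | succ n ih =>
    rw [cvSbar_succ, ih, cvXbar_succ hinf, crossingTransform_succ h0 hS, cvWalk_succ X (n + 1)]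
    ring

end Transform

/-- **Csaki–Vincze theorem.** If `S` is the walk of a sign sequence `X` with infinitely
many crossings, and `S̄ = T(S)` is its Csaki–Vincze transform with
`Ȳ n = max_{k ≤ n} S̄ k − S̄ n`, then `|Ȳ n − |S n|| ≤ 2` for every `n`. -/
theorem csaki_vincze (X : ℕ → ℤ) (hX : ∀ j, 1 ≤ j → X j = 1 ∨ X j = -1)
    (hinf : {i : ℕ | 1 ≤ i ∧ cvWalk X (i - 1) * cvWalk X (i + 1) < 0}.Infinite)
    (n : ℕ) :
    abs (cvYbar X n - abs (cvWalk X n)) ≤ 2 := by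
  have hS := abs_cvWalk_succ_sub hX
  have hstep : |(|cvWalk X (n + 1)| - |cvWalk X n|)| ≤ 1 :=
    (abs_abs_sub_abs_le _ _).trans (hS n).le
  have hY : cvYbar X n = cvYof (crossingTransform (cvWalk X)) n := by
    rw [cvYbar, cvSbar_eq_crossingTransform hX (hinf.mono fun _ hi => hi.2)]
  have hupper := cvYof_crossingTransform_le (cvWalk X) n
  have hlower := abs_sub_one_le_cvYof_crossingTransform (cvWalk_zero X) hS n
  rw [← hY] at hupper hlower
  rw [abs_le] at hstep ⊢
  constructor <;> linarith
end
end

section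
/- (S̄ depends only on the products X_1·X_{j+1}.) Let X' : {1,2,3,…} → {−1,1} be another sign sequence with walk S', and suppose X_1·X_{j+1} = X'_1·X'_{j+1} for all j ≥ 1. Then the set {i ≥ 1 : S'_{i−1}·S'_{i+1} < 0} is also infinite, the crossing times of S' coincide with those of S, and T(S') = T(S). In particular, taking X' = −X, the transform T is even: T(−S) = T(S). -/
noncomputable section

/-! If `a * X j = b * X' j` for all `j ≥ 1`, with `a` and `b` nonzero, then `a * S n = b * S' n`,
so `S i * S k` and `S' i * S' k` have the same sign and the crossing times agree. This applies with
`a = X 1` and `b = X' 1`. The increments of `S̄` involve the signs only through the crossing times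
and the products `X 1 * X (j + 1)`. -/

section Proportional

variable {X X' : ℕ → ℤ} {a b : ℤ}

theorem mul_cvWalk_eq_mul_cvWalk (h : ∀ j, 1 ≤ j → a * X j = b * X' j) (n : ℕ) :
    a * cvWalk X n = b * cvWalk X' n := by
  simp only [cvWalk, Finset.mul_sum]
  exact Finset.sum_congr rfl fun j hj => h j (Finset.mem_Icc.mp hj).1

theorem cvWalk_mul_cvWalk_neg_iff (ha : a ≠ 0) (hb : b ≠ 0)
    (h : ∀ j, 1 ≤ j → a * X j = b * X' j) (i k : ℕ) :
    cvWalk X i * cvWalk X k < 0 ↔ cvWalk X' i * cvWalk X' k < 0 :=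
  calc
    cvWalk X i * cvWalk X k < 0 ↔ a * cvWalk X i * (a * cvWalk X k) < 0 := by
      rw [mul_mul_mul_comm, ← smul_eq_mul (a * a), smul_neg_iff_of_pos_left (mul_self_pos.mpr ha)]
    _ ↔ b * cvWalk X' i * (b * cvWalk X' k) < 0 := by
      simp only [mul_cvWalk_eq_mul_cvWalk h]
    _ ↔ cvWalk X' i * cvWalk X' k < 0 := by
      rw [mul_mul_mul_comm, ← smul_eq_mul (b * b), smul_neg_iff_of_pos_left (mul_self_pos.mpr hb)]

theorem cvTau_eq_of_mul_eq_mul (ha : a ≠ 0) (hb : b ≠ 0)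
    (h : ∀ j, 1 ≤ j → a * X j = b * X' j) (l : ℕ) : cvTau X l = cvTau X' l := by
  induction l with
  | zero => rfl
  | succ l ih => simp only [cvTau, ih, cvWalk_mul_cvWalk_neg_iff ha hb h]

end Proportional

theorem cvXbar_congr {X X' : ℕ → ℤ} {j : ℕ} (hτ : ∀ l, cvTau X l = cvTau X' l)
    (hprod : X 1 * X (j + 1) = X' 1 * X' (j + 1)) : cvXbar X j = cvXbar X' j := by
  simp only [cvXbar, mul_assoc _ (X _) (X _), mul_assoc _ (X' _) (X' _), hτ, hprod]

theorem cvSbar_congr {X X' : ℕ → ℤ} (hτ : ∀ l, cvTau X l = cvTau X' l)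
    (hprod : ∀ j, 1 ≤ j → X 1 * X (j + 1) = X' 1 * X' (j + 1)) (n : ℕ) :
    cvSbar X n = cvSbar X' n :=
  Finset.sum_congr rfl fun j hj => cvXbar_congr hτ (hprod j (Finset.mem_Icc.mp hj).1)

theorem cvSbar_neg (X : ℕ → ℤ) (n : ℕ) : cvSbar (fun j => -X j) n = cvSbar X n :=
  cvSbar_congr
    (cvTau_eq_of_mul_eq_mul (neg_ne_zero.mpr one_ne_zero) one_ne_zero fun j _ => by ring)
    (fun _ _ => neg_mul_neg _ _) n

theorem cv_depends_only_on_products_general {X X' : ℕ → ℤ} (hX : X 1 ≠ 0)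
    (hinf : {i : ℕ | 1 ≤ i ∧ cvWalk X (i - 1) * cvWalk X (i + 1) < 0}.Infinite)
    (habs : |X 1| = |X' 1|)
    (hprod : ∀ j, 1 ≤ j → X 1 * X (j + 1) = X' 1 * X' (j + 1)) :
    ({i : ℕ | 1 ≤ i ∧ cvWalk X' (i - 1) * cvWalk X' (i + 1) < 0}.Infinite ∧
      (∀ l, cvTau X' l = cvTau X l) ∧ (∀ n, cvSbar X' n = cvSbar X n)) ∧
    (∀ n, cvSbar (fun j => -X j) n = cvSbar X n) := by
  have hX' : X' 1 ≠ 0 := by rwa [← abs_ne_zero, ← habs, abs_ne_zero]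
  have hmul : ∀ j, 1 ≤ j → X 1 * X j = X' 1 * X' j
    | 1, _ => abs_eq_iff_mul_self_eq.mp habs
    | j + 2, _ => hprod (j + 1) j.succ_pos
  have hτ : ∀ l, cvTau X l = cvTau X' l := cvTau_eq_of_mul_eq_mul hX hX' hmul
  refine ⟨⟨?_, fun l => (hτ l).symm, fun n => (cvSbar_congr hτ hprod n).symm⟩, cvSbar_neg X⟩
  simpa only [cvWalk_mul_cvWalk_neg_iff hX hX' hmul] using hinf

/-- **`S̄` depends only on the products `X 1 · X (j+1)`.** If `X'` is another sign
sequence with `X 1 · X (j+1) = X' 1 · X' (j+1)` for all `j ≥ 1`, then the crossing set of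
`S'` is also infinite, the crossing times of `S'` coincide with those of `S`, and
`T(S') = T(S)`.  In particular (taking `X' = −X`), the transform `T` is even:
`T(−S) = T(S)`. -/
theorem cv_depends_only_on_products (X : ℕ → ℤ) (hX : ∀ j, 1 ≤ j → X j = 1 ∨ X j = -1)
    (hinf : {i : ℕ | 1 ≤ i ∧ cvWalk X (i - 1) * cvWalk X (i + 1) < 0}.Infinite)
    (X' : ℕ → ℤ) (hX' : ∀ j, 1 ≤ j → X' j = 1 ∨ X' j = -1)
    (hprod : ∀ j, 1 ≤ j → X 1 * X (j + 1) = X' 1 * X' (j + 1)) :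
    ({i : ℕ | 1 ≤ i ∧ cvWalk X' (i - 1) * cvWalk X' (i + 1) < 0}.Infinite ∧
      (∀ l, cvTau X' l = cvTau X l) ∧ (∀ n, cvSbar X' n = cvSbar X n)) ∧
    (∀ n, cvSbar (fun j => -X j) n = cvSbar X n) := by
  have hX1 : |X 1| = 1 := (abs_eq zero_le_one).mpr (hX 1 le_rfl)
  have hX1' : |X' 1| = 1 := (abs_eq zero_le_one).mpr (hX' 1 le_rfl)
  exact cv_depends_only_on_products_general (by grind) hinf (hX1.trans hX1'.symm) hprod
end
end

section
/- (Inverse construction of the Csaki–Vincze transform.) Let X̄ : {1,2,3,…} → {−1,1} be a sign sequence with walk S̄_0 = 0, S̄_n = X̄_1 + ⋯ + X̄_n, and assume sup_n S̄_n = +∞, so that σ_l := min{n ≥ 0 : S̄_n = 2l} is finite for every l ≥ 1; set σ_0 = 0. Let ε ∈ {−1,1} and define X_1 = ε and, for j ≥ 1, X_{j+1} = Σ_{l≥0} (−1)^{l+1}·ε·X̄_j·1{σ_l + 1 ≤ j ≤ σ_{l+1}}, with S the walk of X. Then the set {i ≥ 1 : S_{i−1}·S_{i+1} < 0} is infinite,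 the crossing times τ_l of S (defined by τ_0 = 0, τ_{l+1} = min{i > τ_l : S_{i−1}·S_{i+1} < 0}) coincide with the σ_l, and T(S) = S̄; in particular |Ȳ_n − |S_n|| ≤ 2 for all n, where Ȳ_n = max_{0≤k≤n} S̄_k − S̄_n. -/
noncomputable section

/-!
Put `s l = (-1) ^ l * X 1`. The sign flips at the times `σ l` are arranged so that, summing
increments from `σ l` on, `S (n + 1) = s l * (2 * l + 1 - S̄ n)` for `σ l ≤ n ≤ σ (l + 1)`; the
start value is correct in every block because `S̄` gains exactly `2` per block. Before time
`σ (l + 1)` the second factor is nonnegative, so `S` keeps the sign `s l` (or vanishes) throughout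
block `l` and changes sign precisely at `σ (l + 1)`: these are the crossings. Undoing the signs
returns `X̄`. Finally, the running maximum of `S̄` in block `l` is `2 * l` or `2 * l + 1`, hence
within `1` of `S̄ n + |S (n + 1)|`.
-/

section Blocks

theorem exists_mem_Ico_of_strictMono {σ : ℕ → ℕ} (hσ : StrictMono σ) {n : ℕ} (hn : σ 0 ≤ n) :
    ∃ l, n ∈ Set.Ico (σ l) (σ (l + 1)) := by
  have hmem : n ∈ Set.Ico (σ 0) (σ (n + 1)) := ⟨hn, hσ.le_apply (x := n + 1)⟩
  simpa using Set.iUnion₂_subset_iUnion _ _ (Ico_subset_biUnion_Ico (n + 1) σ hmem)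

theorem exists_mem_Ioc_of_strictMono {σ : ℕ → ℕ} (hσ : StrictMono σ) {n : ℕ} (hn : σ 0 < n) :
    ∃ l, n ∈ Set.Ioc (σ l) (σ (l + 1)) := by
  have hmem : n ∈ Set.Ioc (σ 0) (σ n) := ⟨hn, hσ.le_apply⟩
  simpa using Set.iUnion₂_subset_iUnion _ _ (Ioc_subset_biUnion_Ioc n σ hmem)

theorem sum_mul_ite_mem_Ioc {R : Type*} [NonAssocSemiring R] {σ : ℕ → ℕ} (hσ : StrictMono σ)
    (c : ℕ → R) {j l : ℕ} (hj : j ∈ Set.Ioc (σ l) (σ (l + 1))) :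
    ∑ k ∈ Finset.range (j + 1), c k * (if σ k + 1 ≤ j ∧ j ≤ σ (k + 1) then 1 else 0) = c l := by
  have hlj : l < j := hσ.le_apply.trans_lt hj.1
  rw [Finset.sum_eq_single_of_mem l (Finset.mem_range.2 (by omega)),
    if_pos ⟨Nat.succ_le_of_lt hj.1, hj.2⟩, mul_one]
  intro k _ hkl
  have hdisj : Disjoint (Set.Ioc (σ k) (σ (k + 1))) (Set.Ioc (σ l) (σ (l + 1))) :=
    hσ.monotone.pairwise_disjoint_on_Ioc_succ hkl
  rw [if_neg fun ⟨hkj, hjk⟩ ↦ Set.disjoint_left.1 hdisj ⟨hkj, hjk⟩ hj, mul_zero]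

end Blocks

section Walk

variable {X : ℕ → ℤ}

/-- Sign sequences `{1, 2, …} → {-1, 1}`; the value at the index `0` is unconstrained, since
`cvWalk` ignores it. -/
def IsSignSeq (X : ℕ → ℤ) : Prop := ∀ j, 1 ≤ j → X j = 1 ∨ X j = -1

theorem IsSignSeq.abs_eq_one (hX : IsSignSeq X) (n : ℕ) : |X (n + 1)| = 1 :=
  (abs_eq zero_le_one).2 (hX (n + 1) (by omega))

theorem IsSignSeq.cvWalk_succ_eq_or (hX : IsSignSeq X) (n : ℕ) :
    cvWalk X (n + 1) = cvWalk X n + 1 ∨ cvWalk X (n + 1) = cvWalk X n - 1 := by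
  rw [cvWalk_succ]
  have := hX (n + 1) (by omega)
  omega

theorem IsSignSeq.cvWalk_lt_of_forall_ne (hX : IsSignSeq X) {a : ℤ} (ha : 0 ≤ a) {n : ℕ}
    (hne : ∀ k ≤ n, cvWalk X k ≠ a) : cvWalk X n < a := by
  induction n with
  | zero => exact (cvWalk_zero X ▸ ha).lt_of_ne (hne 0 le_rfl)
  | succ n ih =>
    have hlt := ih fun k hk ↦ hne k (by omega)
    have := hne (n + 1) le_rfl
    have := hX.cvWalk_succ_eq_or n
    omega

theorem cvTau_eq_of_crossings {σ : ℕ → ℕ} (hσ : StrictMono σ) (hσ0 : σ 0 = 0)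
    (hcross : ∀ l, cvWalk X (σ (l + 1) - 1) * cvWalk X (σ (l + 1) + 1) < 0)
    (hnocross : ∀ l, ∀ i ∈ Set.Ioo (σ l) (σ (l + 1)),
      0 ≤ cvWalk X (i - 1) * cvWalk X (i + 1)) :
    cvTau X = σ := by
  funext l
  induction l with
  | zero => exact hσ0.symm
  | succ l ih =>
    rw [cvTau, ih]
    refine IsLeast.csInf_eq ⟨⟨hσ l.lt_succ_self, hcross l⟩, fun i ⟨hli, hi⟩ ↦ ?_⟩
    by_contra! hil
    exact hi.not_ge (hnocross l i ⟨hli, hil⟩)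

theorem infinite_crossings {σ : ℕ → ℕ} (hσ : StrictMono σ)
    (hcross : ∀ l, cvWalk X (σ (l + 1) - 1) * cvWalk X (σ (l + 1) + 1) < 0) :
    {i : ℕ | 1 ≤ i ∧ cvWalk X (i - 1) * cvWalk X (i + 1) < 0}.Infinite :=
  Set.infinite_of_injective_forall_mem (hσ.injective.comp Nat.succ_injective)
    fun l ↦ ⟨(Nat.zero_le _).trans_lt (hσ l.lt_succ_self), hcross l⟩

end Walk

section FirstPassage

variable {X : ℕ → ℤ}

/-- The first time at which the walk of `X` is at level `a` (and `0` if it never is). -/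
def firstPassage (X : ℕ → ℤ) (a : ℤ) : ℕ := sInf {n : ℕ | cvWalk X n = a}

theorem firstPassage_zero (X : ℕ → ℤ) : firstPassage X 0 = 0 :=
  Nat.sInf_eq_zero.2 (.inl (cvWalk_zero X))

theorem IsSignSeq.cvWalk_lt_of_lt_firstPassage (hX : IsSignSeq X) {a : ℤ} (ha : 0 ≤ a) {n : ℕ}
    (hn : n < firstPassage X a) : cvWalk X n < a :=
  hX.cvWalk_lt_of_forall_ne ha fun _ hk ↦ Nat.notMem_of_lt_sInf (hk.trans_lt hn)

theorem IsSignSeq.cvWalk_firstPassage (hX : IsSignSeq X) {a : ℤ} (ha : 0 ≤ a)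
    (hreach : ∃ n, a ≤ cvWalk X n) : cvWalk X (firstPassage X a) = a := by
  obtain ⟨n, hn⟩ := hreach
  refine Nat.sInf_mem (s := {n | cvWalk X n = a}) ?_
  by_contra! hempty
  exact hn.not_gt (hX.cvWalk_lt_of_forall_ne ha fun k _ ↦ Set.eq_empty_iff_forall_notMem.1 hempty k)

theorem IsSignSeq.firstPassage_lt_firstPassage (hX : IsSignSeq X) {a b : ℤ} (ha : 0 ≤ a)
    (hab : a < b) (hreach : ∃ n, b ≤ cvWalk X n) : firstPassage X a < firstPassage X b := by
  have hb : cvWalk X (firstPassage X b) = b := hX.cvWalk_firstPassage (ha.trans hab.le) hreach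
  have hwa : cvWalk X (firstPassage X a) = a :=
    hX.cvWalk_firstPassage ha (hreach.imp fun _ ↦ hab.le.trans)
  by_contra! hle
  rcases hle.lt_or_eq with hlt | heq
  · have := hX.cvWalk_lt_of_lt_firstPassage ha hlt
    omega
  · rw [heq] at hb
    omega

theorem IsSignSeq.cvWalk_eq_of_firstPassage_eq_succ (hX : IsSignSeq X) {a : ℤ} (ha : 0 ≤ a)
    (hreach : ∃ n, a ≤ cvWalk X n) {n : ℕ} (hn : firstPassage X a = n + 1) :
    cvWalk X n = a - 1 := by
  have hlt := hX.cvWalk_lt_of_lt_firstPassage ha (n.lt_succ_self.trans_eq hn.symm)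
  have heq := hX.cvWalk_firstPassage ha hreach
  rw [hn] at heq
  have := hX.cvWalk_succ_eq_or n
  omega

end FirstPassage

section EvenPassage

variable {X : ℕ → ℤ}

/-- The first passage times `σ l` through the even levels, which are to become the crossing times.
They cut time into blocks; block `l` lies between `σ l` and `σ (l + 1)`. -/
def evenPassage (X : ℕ → ℤ) (l : ℕ) : ℕ := firstPassage X (2 * l)

theorem evenPassage_zero (X : ℕ → ℤ) : evenPassage X 0 = 0 := firstPassage_zero X

theorem IsSignSeq.cvWalk_evenPassage (hX : IsSignSeq X) (hsup : ∀ M : ℤ, ∃ n, M ≤ cvWalk X n)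
    (l : ℕ) : cvWalk X (evenPassage X l) = 2 * l :=
  hX.cvWalk_firstPassage (by positivity) (hsup _)

theorem IsSignSeq.strictMono_evenPassage (hX : IsSignSeq X)
    (hsup : ∀ M : ℤ, ∃ n, M ≤ cvWalk X n) : StrictMono (evenPassage X) :=
  fun _ _ hlm ↦ hX.firstPassage_lt_firstPassage (by positivity) (by omega) (hsup _)

theorem IsSignSeq.cvWalk_le_of_lt_evenPassage_succ (hX : IsSignSeq X) {l n : ℕ}
    (hn : n < evenPassage X (l + 1)) : cvWalk X n ≤ 2 * l + 1 := by
  have := hX.cvWalk_lt_of_lt_firstPassage (by positivity) hn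
  omega

theorem IsSignSeq.cvWalk_eq_of_evenPassage_succ_eq_succ (hX : IsSignSeq X)
    (hsup : ∀ M : ℤ, ∃ n, M ≤ cvWalk X n) {l n : ℕ} (hn : evenPassage X (l + 1) = n + 1) :
    cvWalk X n = 2 * l + 1 := by
  have := hX.cvWalk_eq_of_firstPassage_eq_succ (by positivity) (hsup _) hn
  omega

theorem IsSignSeq.abs_cvYof_cvWalk_sub_le (hX : IsSignSeq X)
    (hsup : ∀ M : ℤ, ∃ n, M ≤ cvWalk X n) {l n : ℕ}
    (hn : n ∈ Set.Ico (evenPassage X l) (evenPassage X (l + 1))) :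
    |cvYof (cvWalk X) n - (2 * l + 1 - cvWalk X n)| ≤ 1 := by
  have hlower : 2 * (l : ℤ) ≤
      (Finset.range (n + 1)).sup' Finset.nonempty_range_add_one (cvWalk X) :=
    hX.cvWalk_evenPassage hsup l ▸
      Finset.le_sup' (cvWalk X) (Finset.mem_range.2 (Nat.lt_succ_of_le hn.1))
  have hupper : (Finset.range (n + 1)).sup' Finset.nonempty_range_add_one (cvWalk X) ≤
      2 * (l : ℤ) + 1 :=
    Finset.sup'_le _ _ fun k hk ↦ hX.cvWalk_le_of_lt_evenPassage_succ
      ((Nat.le_of_lt_succ (Finset.mem_range.1 hk)).trans_lt hn.2)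
  rw [cvYof, abs_le]
  omega

end EvenPassage

section BlockSign

/-- The sign `s l` which the walk of `X` has in block `l` when it starts with the sign `X 1` and
changes sign from each block to the next. -/
def blockSign (X : ℕ → ℤ) (l : ℕ) : ℤ := (-1) ^ l * X 1

theorem blockSign_zero (X : ℕ → ℤ) : blockSign X 0 = X 1 := by simp [blockSign]

theorem blockSign_succ (X : ℕ → ℤ) (l : ℕ) : blockSign X (l + 1) = -blockSign X l := by
  simp [blockSign, pow_succ]

theorem cvXbar_eq_blockSign_mul {X : ℕ → ℤ} (hτ : StrictMono (cvTau X)) {l j : ℕ}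
    (hj : j ∈ Set.Ioc (cvTau X l) (cvTau X (l + 1))) :
    cvXbar X j = blockSign X (l + 1) * X (j + 1) :=
  sum_mul_ite_mem_Ioc hτ (fun k ↦ (-1) ^ (k + 1) * X 1 * X (j + 1)) hj

end BlockSign

/-- `X` is obtained from `Xb` by the inverse construction: in each block, the increments are those
of `Xb`, delayed by one step and multiplied by a sign that alternates between blocks. The initial
sign `ε` is read off as `X 1`. -/
structure IsCVInverse (Xb X : ℕ → ℤ) : Prop where
  one_eq_or : X 1 = 1 ∨ X 1 = -1
  succ_eq : ∀ l, ∀ j ∈ Set.Ioc (evenPassage Xb l) (evenPassage Xb (l + 1)),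
    X (j + 1) = blockSign X (l + 1) * Xb j

namespace IsCVInverse

variable {Xb X : ℕ → ℤ}

theorem abs_blockSign (h : IsCVInverse Xb X) (l : ℕ) : |blockSign X l| = 1 := by
  rw [blockSign, abs_mul, abs_neg_one_pow, one_mul, abs_eq zero_le_one]
  exact h.one_eq_or

theorem blockSign_mul_self (h : IsCVInverse Xb X) (l : ℕ) :
    blockSign X l * blockSign X l = 1 := by
  rw [← abs_mul_abs_self, h.abs_blockSign, one_mul]

theorem isSignSeq (h : IsCVInverse Xb X) (hXb : IsSignSeq Xb)
    (hsup : ∀ M : ℤ, ∃ n, M ≤ cvWalk Xb n) : IsSignSeq X := by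
  rintro (_ | _ | j) hj
  · omega
  · exact h.one_eq_or
  · obtain ⟨l, hl⟩ := exists_mem_Ioc_of_strictMono (hXb.strictMono_evenPassage hsup)
      (n := j + 1) (by simp [evenPassage_zero])
    rw [← abs_eq zero_le_one, h.succ_eq l (j + 1) hl, abs_mul, h.abs_blockSign,
      hXb.abs_eq_one, one_mul]

theorem cvWalk_succ_of_cvWalk_start (h : IsCVInverse Xb X) (hXb : IsSignSeq Xb)
    (hsup : ∀ M : ℤ, ∃ n, M ≤ cvWalk Xb n) {l : ℕ}
    (hstart : cvWalk X (evenPassage Xb l + 1) = blockSign X l) {n : ℕ}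
    (hn : n ∈ Set.Icc (evenPassage Xb l) (evenPassage Xb (l + 1))) :
    cvWalk X (n + 1) = blockSign X l * (2 * l + 1 - cvWalk Xb n) := by
  obtain ⟨hln, hnl⟩ := hn
  induction n, hln using Nat.le_induction with
  | base => rw [hstart, hXb.cvWalk_evenPassage hsup]; ring
  | succ n hln ih =>
    rw [cvWalk_succ X (n + 1), ih (by omega), h.succ_eq l (n + 1) ⟨by omega, hnl⟩,
      blockSign_succ, cvWalk_succ Xb n]
    ring

theorem cvWalk_evenPassage_add_one (h : IsCVInverse Xb X) (hXb : IsSignSeq Xb)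
    (hsup : ∀ M : ℤ, ∃ n, M ≤ cvWalk Xb n) (l : ℕ) :
    cvWalk X (evenPassage Xb l + 1) = blockSign X l := by
  induction l with
  | zero => rw [evenPassage_zero, zero_add, cvWalk_one, blockSign_zero]
  | succ l ih =>
    have hmono : evenPassage Xb l ≤ evenPassage Xb (l + 1) :=
      (hXb.strictMono_evenPassage hsup).monotone l.le_succ
    rw [h.cvWalk_succ_of_cvWalk_start hXb hsup ih ⟨hmono, le_rfl⟩, hXb.cvWalk_evenPassage hsup,
      blockSign_succ]
    push_cast
    ring

theorem cvWalk_succ_of_mem_Icc (h : IsCVInverse Xb X) (hXb : IsSignSeq Xb)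
    (hsup : ∀ M : ℤ, ∃ n, M ≤ cvWalk Xb n) {l n : ℕ}
    (hn : n ∈ Set.Icc (evenPassage Xb l) (evenPassage Xb (l + 1))) :
    cvWalk X (n + 1) = blockSign X l * (2 * l + 1 - cvWalk Xb n) :=
  h.cvWalk_succ_of_cvWalk_start hXb hsup (h.cvWalk_evenPassage_add_one hXb hsup l) hn

theorem cvWalk_evenPassage (h : IsCVInverse Xb X) (hXb : IsSignSeq Xb)
    (hsup : ∀ M : ℤ, ∃ n, M ≤ cvWalk Xb n) (l : ℕ) : cvWalk X (evenPassage Xb l) = 0 := by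
  cases l with
  | zero => rw [evenPassage_zero, cvWalk_zero]
  | succ l =>
    have hlt : evenPassage Xb l < evenPassage Xb (l + 1) :=
      hXb.strictMono_evenPassage hsup l.lt_succ_self
    obtain ⟨n, hn⟩ := Nat.exists_eq_add_one_of_ne_zero hlt.ne_bot
    rw [hn, h.cvWalk_succ_of_mem_Icc hXb hsup (l := l) ⟨by omega, by omega⟩,
      hXb.cvWalk_eq_of_evenPassage_succ_eq_succ hsup hn, sub_self, mul_zero]

theorem blockSign_mul_cvWalk_nonneg (h : IsCVInverse Xb X) (hXb : IsSignSeq Xb)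
    (hsup : ∀ M : ℤ, ∃ n, M ≤ cvWalk Xb n) {l i : ℕ}
    (hi : i ∈ Set.Icc (evenPassage Xb l) (evenPassage Xb (l + 1))) :
    0 ≤ blockSign X l * cvWalk X i := by
  obtain ⟨hli, hil⟩ := hi
  rcases hli.eq_or_lt with rfl | hlt
  · rw [h.cvWalk_evenPassage hXb hsup, mul_zero]
  · obtain ⟨n, rfl⟩ := Nat.exists_eq_add_one_of_ne_zero hlt.ne_bot
    rw [h.cvWalk_succ_of_mem_Icc hXb hsup (l := l) ⟨by omega, by omega⟩, ← mul_assoc,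
      h.blockSign_mul_self, one_mul, sub_nonneg]
    exact hXb.cvWalk_le_of_lt_evenPassage_succ hil

theorem cvWalk_mul_cvWalk_neg (h : IsCVInverse Xb X) (hXb : IsSignSeq Xb)
    (hsup : ∀ M : ℤ, ∃ n, M ≤ cvWalk Xb n) (l : ℕ) :
    cvWalk X (evenPassage Xb (l + 1) - 1) * cvWalk X (evenPassage Xb (l + 1) + 1) < 0 := by
  have hlt : evenPassage Xb l < evenPassage Xb (l + 1) :=
    hXb.strictMono_evenPassage hsup l.lt_succ_self
  obtain ⟨n, hn⟩ := Nat.exists_eq_add_one_of_ne_zero hlt.ne_bot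
  have hnonneg : 0 ≤ blockSign X l * cvWalk X n :=
    h.blockSign_mul_cvWalk_nonneg hXb hsup ⟨by omega, by omega⟩
  have hne : cvWalk X n ≠ 0 := by
    have hzero := h.cvWalk_evenPassage hXb hsup (l + 1)
    rw [hn] at hzero
    have := (h.isSignSeq hXb hsup).cvWalk_succ_eq_or n
    omega
  have hsign : blockSign X l ≠ 0 := left_ne_zero_of_mul_eq_one (h.blockSign_mul_self l)
  rw [h.cvWalk_evenPassage_add_one hXb hsup, blockSign_succ, hn, Nat.add_sub_cancel, mul_neg,
    neg_lt_zero, mul_comm]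
  exact hnonneg.lt_of_ne' (mul_ne_zero hsign hne)

theorem cvWalk_mul_cvWalk_nonneg (h : IsCVInverse Xb X) (hXb : IsSignSeq Xb)
    (hsup : ∀ M : ℤ, ∃ n, M ≤ cvWalk Xb n) (l : ℕ) {i : ℕ}
    (hi : i ∈ Set.Ioo (evenPassage Xb l) (evenPassage Xb (l + 1))) :
    0 ≤ cvWalk X (i - 1) * cvWalk X (i + 1) := by
  obtain ⟨hli, hil⟩ := hi
  have hpred : 0 ≤ blockSign X l * cvWalk X (i - 1) :=
    h.blockSign_mul_cvWalk_nonneg hXb hsup ⟨by omega, by omega⟩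
  have hsucc : 0 ≤ blockSign X l * cvWalk X (i + 1) :=
    h.blockSign_mul_cvWalk_nonneg hXb hsup ⟨by omega, by omega⟩
  simpa only [mul_mul_mul_comm, h.blockSign_mul_self, one_mul] using mul_nonneg hpred hsucc

theorem cvTau_eq (h : IsCVInverse Xb X) (hXb : IsSignSeq Xb)
    (hsup : ∀ M : ℤ, ∃ n, M ≤ cvWalk Xb n) : cvTau X = evenPassage Xb :=
  cvTau_eq_of_crossings (hXb.strictMono_evenPassage hsup) (evenPassage_zero Xb)
    (h.cvWalk_mul_cvWalk_neg hXb hsup) fun l _ ↦ h.cvWalk_mul_cvWalk_nonneg hXb hsup l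

theorem cvXbar_eq (h : IsCVInverse Xb X) (hXb : IsSignSeq Xb)
    (hsup : ∀ M : ℤ, ∃ n, M ≤ cvWalk Xb n) {j : ℕ} (hj : 1 ≤ j) : cvXbar X j = Xb j := by
  have hmono := hXb.strictMono_evenPassage hsup
  have hτ := h.cvTau_eq hXb hsup
  obtain ⟨l, hl⟩ := exists_mem_Ioc_of_strictMono hmono
    ((evenPassage_zero Xb).trans_lt hj)
  rw [cvXbar_eq_blockSign_mul (hτ ▸ hmono) (hτ ▸ hl), h.succ_eq l j hl, ← mul_assoc,
    h.blockSign_mul_self, one_mul]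

theorem cvSbar_eq (h : IsCVInverse Xb X) (hXb : IsSignSeq Xb)
    (hsup : ∀ M : ℤ, ∃ n, M ≤ cvWalk Xb n) (n : ℕ) : cvSbar X n = cvWalk Xb n :=
  Finset.sum_congr rfl fun _ hj ↦ h.cvXbar_eq hXb hsup (Finset.mem_Icc.1 hj).1

theorem abs_cvYof_sub_abs_cvWalk_le (h : IsCVInverse Xb X) (hXb : IsSignSeq Xb)
    (hsup : ∀ M : ℤ, ∃ n, M ≤ cvWalk Xb n) (n : ℕ) :
    |cvYof (cvWalk Xb) n - (|cvWalk X n|)| ≤ 2 := by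
  obtain ⟨l, hl⟩ := exists_mem_Ico_of_strictMono (hXb.strictMono_evenPassage hsup)
    (evenPassage_zero Xb ▸ n.zero_le)
  have hnext : |cvWalk X (n + 1)| = 2 * l + 1 - cvWalk Xb n := by
    rw [h.cvWalk_succ_of_mem_Icc hXb hsup (Set.Ico_subset_Icc_self hl), abs_mul,
      h.abs_blockSign, one_mul, abs_of_nonneg]
    exact sub_nonneg.2 (hXb.cvWalk_le_of_lt_evenPassage_succ hl.2)
  have hstep : |(|cvWalk X (n + 1)| - |cvWalk X n|)| ≤ 1 := by
    refine (abs_abs_sub_abs_le _ _).trans ?_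
    rw [cvWalk_succ, add_sub_cancel_left, (h.isSignSeq hXb hsup).abs_eq_one]
  calc |cvYof (cvWalk Xb) n - (|cvWalk X n|)|
      ≤ |cvYof (cvWalk Xb) n - (|cvWalk X (n + 1)|)| + |(|cvWalk X (n + 1)| - |cvWalk X n|)| :=
        abs_sub_le _ _ _
    _ ≤ 1 + 1 := add_le_add (hnext ▸ hXb.abs_cvYof_cvWalk_sub_le hsup hl) hstep
    _ = 2 := one_add_one_eq_two

end IsCVInverse

/-- **Inverse construction of the Csaki–Vincze transform.** Let `X̄` be a sign sequence
whose walk `S̄` satisfies `sup_n S̄ n = +∞`, let `σ l = min {n ≥ 0 : S̄ n = 2l}`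
(`σ 0 = 0`), let `ε ∈ {−1,1}` and let `X` be given by `X 1 = ε` and
`X (j+1) = Σ_{l ≥ 0} (−1)^(l+1) · ε · X̄ j · 1_{σ l + 1 ≤ j ≤ σ (l+1)}`, with walk `S`.
Then `S` has infinitely many crossings, its crossing times `τ l` coincide with the `σ l`,
and `T(S) = S̄`; in particular `|Ȳ n − |S n|| ≤ 2` for all `n`, where
`Ȳ n = max_{k ≤ n} S̄ k − S̄ n`. -/
theorem cv_inverse_construction (Xb : ℕ → ℤ) (hXb : ∀ j, 1 ≤ j → Xb j = 1 ∨ Xb j = -1)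
    (hsup : ∀ M : ℤ, ∃ n : ℕ, M ≤ cvWalk Xb n)
    (σ : ℕ → ℕ) (hσ : ∀ l : ℕ, σ l = sInf {n : ℕ | cvWalk Xb n = 2 * l})
    (ε : ℤ) (hε : ε = 1 ∨ ε = -1)
    (X : ℕ → ℤ) (hX1 : X 1 = ε)
    (hX : ∀ j, 1 ≤ j →
      X (j + 1) = ∑ l ∈ Finset.range (j + 1),
        (-1 : ℤ) ^ (l + 1) * ε * Xb j * (if σ l + 1 ≤ j ∧ j ≤ σ (l + 1) then 1 else 0)) :
    {i : ℕ | 1 ≤ i ∧ cvWalk X (i - 1) * cvWalk X (i + 1) < 0}.Infinite ∧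
    (∀ l, cvTau X l = σ l) ∧
    (∀ n, cvSbar X n = cvWalk Xb n) ∧
    (∀ n, abs (cvYof (cvWalk Xb) n - abs (cvWalk X n)) ≤ 2) := by
  obtain rfl : σ = evenPassage Xb := funext hσ
  subst hX1
  have hmono := IsSignSeq.strictMono_evenPassage hXb hsup
  have h : IsCVInverse Xb X := by
    refine ⟨hε, fun l j hj ↦ ?_⟩
    have hj1 : 1 ≤ j := (Nat.zero_le _).trans_lt hj.1
    exact (hX j hj1).trans (sum_mul_ite_mem_Ioc hmono (fun k ↦ (-1) ^ (k + 1) * X 1 * Xb j) hj)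
  exact ⟨infinite_crossings hmono (h.cvWalk_mul_cvWalk_neg hXb hsup),
    congrFun (h.cvTau_eq hXb hsup), h.cvSbar_eq hXb hsup,
    h.abs_cvYof_sub_abs_cvWalk_le hXb hsup⟩
end
end

section
/- On Ω = {−1,1}^{{1,2,3,…}} equipped with the product of uniform Bernoulli measures (so the coordinate functions (X_j)_{j≥1} are i.i.d. uniform on {−1,1}), the random variable X_1 is independent of the random sequence (X_1·X_{j+1})_{j≥1}. Consequently, S_1 = X_1 is independent of the Csaki–Vincze transform S̄ = T(S), since S̄ is a measurable function of (X_1·X_{j+1})_{j≥1}. -/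
noncomputable section

open MeasureTheory ProbabilityTheory

open Classical in
/-- The Csaki–Vincze transform of the random path `j ↦ X j ω`, defined to be `≡ 0` on the
event where the crossing set is finite. -/
def cvSbarRV {Ω : Type*} (X : ℕ → Ω → ℤ) (ω : Ω) (n : ℕ) : ℤ :=
  if {i : ℕ | 1 ≤ i ∧
      cvWalk (fun j => X j ω) (i - 1) * cvWalk (fun j => X j ω) (i + 1) < 0}.Infinite then
    cvSbar (fun j => X j ω) n
  else 0

/-!
The map `(u, y) ↦ (u, u y)` preserves the joint law of `X 1` and `(X (j + 2))_j`: for each sign `u`,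
the law of `(X (j + 2))_j` is invariant under multiplication by `u`. This makes `X 1` independent of
`(X 1 · X (j + 2))_j`. Reflecting a path changes neither its crossing times nor the products
`X 1 · X (j + 1)`, so `S̄` is also the transform of the path reflected to start with `+1`, whose
steps are `1` followed by `(X 1 · X (j + 2))_j`.
-/

section Independence

variable {Ω : Type*} [MeasurableSpace Ω] {μ : Measure Ω}

/-- The joint law of `(U, g (U, Y))` is the image of the product law of `(U, Y)` under a
skew product, hence again a product. -/
lemma indepFun_uncurry_of_ae_map_eq {α β γ : Type*} [MeasurableSpace α] [MeasurableSpace β]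
    [MeasurableSpace γ] [IsProbabilityMeasure μ] {U : Ω → α} {Y : Ω → β} {g : α → β → γ}
    {ν : Measure γ} (hU : AEMeasurable U μ) (hY : AEMeasurable Y μ)
    (hg : Measurable (Function.uncurry g)) (hUY : IndepFun U Y μ)
    (hν : ∀ᵐ u ∂μ.map U, (μ.map Y).map (g u) = ν) :
    IndepFun U (fun ω => g (U ω) (Y ω)) μ := by
  have : IsProbabilityMeasure (μ.map U) := Measure.isProbabilityMeasure_map hU
  have : SFinite ν := by
    obtain ⟨u, rfl⟩ := hν.exists
    infer_instance
  have hgUY : AEMeasurable (fun ω => g (U ω) (Y ω)) μ := hg.comp_aemeasurable (hU.prodMk hY)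
  have hskew : MeasurePreserving (fun p : α × β => (p.1, g p.1 p.2))
      ((μ.map U).prod (μ.map Y)) ((μ.map U).prod ν) :=
    (MeasurePreserving.id _).skew_product hg hν
  have hjoint : μ.map (fun ω => (U ω, g (U ω) (Y ω))) = (μ.map U).prod ν := by
    rw [← hskew.map_eq, ← hUY.map_prod_eq_prod_map_map hU hY,
      AEMeasurable.map_map_of_aemeasurable hskew.measurable.aemeasurable (hU.prodMk hY)]
    rfl
  have hmarginal : μ.map (fun ω => g (U ω) (Y ω)) = ν := by
    rw [← one_smul ENNReal ν, ← measure_univ (μ := μ.map U), ← Measure.map_snd_prod, ← hjoint,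
      AEMeasurable.map_map_of_aemeasurable (by fun_prop) (hU.prodMk hgUY)]
    rfl
  rw [indepFun_iff_map_prod_eq_prod_map_map hU hgUY, hjoint, hmarginal]

lemma indepFun_smul_of_isNegInvariant {E : Type*} [SubNegMonoid E] [MeasurableSpace E]
    [MeasurableAdd₂ E] [MeasurableNeg E] [IsProbabilityMeasure μ] {U : Ω → ℤ} {Y : Ω → E}
    (hU : AEMeasurable U μ) (hsign : ∀ᵐ ω ∂μ, U ω = 1 ∨ U ω = -1) (hY : AEMeasurable Y μ)
    (hUY : IndepFun U Y μ) (hsymm : (μ.map Y).IsNegInvariant) :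
    IndepFun U (fun ω => U ω • Y ω) μ := by
  have hmap : ∀ᵐ u ∂μ.map U, (μ.map Y).map (u • ·) = μ.map Y := by
    rw [ae_map_iff hU .of_discrete]
    filter_upwards [hsign] with ω hω
    rcases hω with h | h
    · simp only [h, one_zsmul, Measure.map_id']
    · simpa only [h, neg_one_zsmul] using! (μ.map Y).map_neg_eq_self
  exact indepFun_uncurry_of_ae_map_eq hU hY measurable_smul hUY hmap

lemma indepFun_restrict_of_disjoint {ι : Type*} {β : ι → Type*} [∀ i, MeasurableSpace (β i)]
    {f : ∀ i, Ω → β i} {S T : Set ι} (hf : ∀ i, Measurable (f i)) (hindep : iIndepFun f μ)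
    (hST : Disjoint S T) :
    IndepFun (fun ω (i : S) => f i ω) (fun ω (i : T) => f i ω) μ := by
  rw [IndepFun_iff_Indep, MeasurableSpace.comap_process_pi, MeasurableSpace.comap_process_pi,
    iSup_subtype, iSup_subtype]
  exact indep_iSup_of_disjoint (fun i => (hf i).comap_le) hindep hST

lemma indepFun_zero_tail {β : Type*} [MeasurableSpace β] {f : ℕ → Ω → β}
    (hf : ∀ j, Measurable (f j)) (hindep : iIndepFun f μ) :
    IndepFun (f 0) (fun ω j => f (j + 1) ω) μ := by
  have hdisj : Disjoint ({0} : Set ℕ) {0}ᶜ := disjoint_compl_right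
  exact (indepFun_restrict_of_disjoint hf hindep hdisj).comp
    (measurable_pi_apply ⟨0, rfl⟩)
    (measurable_pi_lambda _ fun j => measurable_pi_apply ⟨j + 1, j.succ_ne_zero⟩)

lemma isNegInvariant_infinitePi {ι : Type*} {β : ι → Type*} [∀ i, MeasurableSpace (β i)]
    [∀ i, Neg (β i)] [∀ i, MeasurableNeg (β i)] (ν : ∀ i, Measure (β i))
    [∀ i, IsProbabilityMeasure (ν i)] [∀ i, (ν i).IsNegInvariant] :
    (Measure.infinitePi ν).IsNegInvariant where
  neg_eq_self := by
    rw [Measure.neg_def]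
    refine (Measure.infinitePi_map_pi ν fun i => measurable_neg).trans ?_
    simp only [Measure.map_neg_eq_self]

lemma isNegInvariant_map_pi {ι : Type*} {β : ι → Type*} [∀ i, MeasurableSpace (β i)]
    [∀ i, Neg (β i)] [∀ i, MeasurableNeg (β i)] {Y : ∀ i, Ω → β i} (hY : ∀ i, Measurable (Y i))
    (hindep : iIndepFun Y μ) (hsymm : ∀ i, (μ.map (Y i)).IsNegInvariant) :
    (μ.map fun ω i => Y i ω).IsNegInvariant := by
  have := hindep.isProbabilityMeasure
  have (i : ι) : IsProbabilityMeasure (μ.map (Y i)) :=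
    Measure.isProbabilityMeasure_map (hY i).aemeasurable
  rw [hindep.map_fun_eq_infinitePi_map hY]
  exact isNegInvariant_infinitePi _

lemma isNegInvariant_map_of_sign {U : Ω → ℤ} (hU : AEMeasurable U μ)
    (hsign : ∀ᵐ ω ∂μ, U ω = 1 ∨ U ω = -1) (hfair : μ {ω | U ω = 1} = μ {ω | U ω = -1}) :
    (μ.map U).IsNegInvariant where
  neg_eq_self := by
    refine Measure.ext_of_singleton fun a => ?_
    rw [Measure.neg_apply, Set.neg_singleton,
      Measure.map_apply_of_aemeasurable hU (measurableSet_singleton _),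
      Measure.map_apply_of_aemeasurable hU (measurableSet_singleton _)]
    have hnull {b : ℤ} (h1 : b ≠ 1) (h2 : b ≠ -1) : μ (U ⁻¹' {b}) = 0 := by
      refine measure_eq_zero_iff_ae_notMem.mpr ?_
      filter_upwards [hsign] with ω hω
      simp only [Set.mem_preimage, Set.mem_singleton_iff]
      omega
    by_cases h1 : a = 1
    · subst h1
      exact hfair.symm
    by_cases h2 : a = -1
    · subst h2
      exact hfair
    rw [hnull (by omega) (by omega), hnull h1 h2]

end Independence

section Reflection

variable {c : ℤ} {x z : ℕ → ℤ}

lemma cvWalk_eq_mul (hz : ∀ j, 1 ≤ j → z j = c * x j) (n : ℕ) :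
    cvWalk z n = c * cvWalk x n := by
  rw [cvWalk, cvWalk, Finset.mul_sum]
  exact Finset.sum_congr rfl fun j hj => hz j (Finset.mem_Icc.mp hj).1

variable (hc : c * c = 1) (hz : ∀ j, 1 ≤ j → z j = c * x j)
include hc hz

lemma cvWalk_mul_cvWalk_reflect (m n : ℕ) :
    cvWalk z m * cvWalk z n = cvWalk x m * cvWalk x n := by
  rw [cvWalk_eq_mul hz, cvWalk_eq_mul hz, mul_mul_mul_comm, hc, one_mul]

lemma cvTau_reflect (l : ℕ) : cvTau z l = cvTau x l := by
  induction l with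
  | zero => rfl
  | succ l ih => simp only [cvTau, ih, cvWalk_mul_cvWalk_reflect hc hz]

lemma cvXbar_reflect (j : ℕ) : cvXbar z j = cvXbar x j := by
  have hprod : z 1 * z (j + 1) = x 1 * x (j + 1) := by
    rw [hz 1 le_rfl, hz (j + 1) (by omega), mul_mul_mul_comm, hc, one_mul]
  simp only [cvXbar, mul_assoc ((-1) ^ _) (_ : ℤ), hprod, cvTau_reflect hc hz]

end Reflection

section Path

/-- The set of crossing times `i ≥ 1` of the walk with steps `x`. -/
def cvCrossings (x : ℕ → ℤ) : Set ℕ := {i | 1 ≤ i ∧ cvWalk x (i - 1) * cvWalk x (i + 1) < 0}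

open Classical in
/-- The Csaki–Vincze transform `T` as a map on deterministic step sequences, with value `0` when
there are finitely many crossings; `cvSbarRV X ω` is its value at the path `j ↦ X j ω`. -/
def cvTransform (x : ℕ → ℤ) (n : ℕ) : ℤ := if (cvCrossings x).Infinite then cvSbar x n else 0

lemma cvSbarRV_eq_cvTransform {Ω : Type*} (X : ℕ → Ω → ℤ) (ω : Ω) :
    cvSbarRV X ω = cvTransform fun j => X j ω := rfl

lemma cvTransform_reflect {c : ℤ} {x z : ℕ → ℤ} (hc : c * c = 1)
    (hz : ∀ j, 1 ≤ j → z j = c * x j) : cvTransform z = cvTransform x := by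
  funext n
  have hcrossings : cvCrossings z = cvCrossings x := by
    simp only [cvCrossings, cvWalk_mul_cvWalk_reflect hc hz]
  have hSbar : cvSbar z n = cvSbar x n := by
    simp only [cvSbar, cvXbar_reflect hc hz]
  rw [cvTransform, cvTransform, hcrossings, hSbar]

/-- The step sequence with first step `1` and further steps `y 0, y 1, …`. The value at index `0`,
which is not a step, is arbitrary. -/
def cvPrependOne (y : ℕ → ℤ) : ℕ → ℤ
  | 0 => 0
  | 1 => 1
  | j + 2 => y j

lemma cvTransform_cvPrependOne {x : ℕ → ℤ} (hx : x 1 * x 1 = 1) :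
    cvTransform (cvPrependOne fun j => x 1 * x (j + 2)) = cvTransform x := by
  refine cvTransform_reflect hx fun j hj => ?_
  match j, hj with
  | 1, _ => exact hx.symm
  | j + 2, _ => rfl

end Path

section Measurability

lemma measurable_sInf_nat : Measurable (sInf : Set ℕ → ℕ) := by
  refine measurable_of_Iic fun k => ?_
  have hIic : sInf ⁻¹' Set.Iic k = {s : Set ℕ | (∃ i, i ≤ k ∧ i ∈ s) ∨ ∀ i, i ∉ s} := by
    ext s
    simp only [Set.mem_preimage, Set.mem_Iic, Set.mem_ofPred_eq]
    constructor
    · intro hk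
      rcases s.eq_empty_or_nonempty with rfl | hs
      · exact .inr fun i => Set.notMem_empty i
      · exact .inl ⟨sInf s, hk, Nat.sInf_mem hs⟩
    · rintro (⟨i, hik, his⟩ | hs)
      · exact (Nat.sInf_le his).trans hik
      · simp [Set.eq_empty_of_forall_notMem hs]
  rw [hIic, measurableSet_setOfPred]
  fun_prop

lemma measurable_cvWalk (n : ℕ) : Measurable fun x => cvWalk x n := by
  unfold cvWalk
  fun_prop

lemma measurable_cvWalk_mul_cvWalk_lt (m n : ℕ) :
    Measurable fun x => cvWalk x m * cvWalk x n < 0 :=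
  measurableSet_setOfPred.mp
    (measurableSet_lt ((measurable_cvWalk m).mul (measurable_cvWalk n)) measurable_const)

lemma measurable_cvTau (l : ℕ) : Measurable fun x => cvTau x l := by
  induction l with
  | zero => exact measurable_const
  | succ l ih =>
    refine measurable_sInf_nat.comp (measurable_set_iff.mpr fun i => ?_)
    exact (measurableSet_setOfPred.mp (measurableSet_lt ih measurable_const)).and
      (measurable_cvWalk_mul_cvWalk_lt _ _)

lemma measurable_cvCrossings : Measurable cvCrossings :=
  measurable_set_iff.mpr fun _ => measurable_const.and (measurable_cvWalk_mul_cvWalk_lt _ _)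

lemma measurable_cvXbar (j : ℕ) : Measurable fun x => cvXbar x j := by
  have hexcursion (l : ℕ) : MeasurableSet {x | cvTau x l + 1 ≤ j ∧ j ≤ cvTau x (l + 1)} :=
    (measurableSet_le ((measurable_cvTau l).add_const 1) measurable_const).inter
      (measurableSet_le measurable_const (measurable_cvTau (l + 1)))
  exact Finset.measurable_fun_sum _ fun l _ => Measurable.mul (by fun_prop)
    (Measurable.ite (hexcursion l) measurable_const measurable_const)

lemma measurable_cvTransform : Measurable cvTransform := by
  refine measurable_pi_iff.mpr fun n => Measurable.ite ?_ ?_ measurable_const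
  · exact measurable_cvCrossings MeasurableSet.setOfPred_infinite
  · exact Finset.measurable_fun_sum _ fun j _ => measurable_cvXbar j

lemma measurable_cvPrependOne : Measurable cvPrependOne := by
  refine measurable_pi_iff.mpr fun j => ?_
  match j with
  | 0 | 1 => exact measurable_const
  | j + 2 => exact measurable_pi_apply j

end Measurability

theorem cv_first_step_indep_transform_general {Ω : Type*} [MeasurableSpace Ω] (μ : Measure Ω)
    [IsProbabilityMeasure μ] (X : ℕ → Ω → ℤ)
    (hmeas : ∀ j, 1 ≤ j → AEMeasurable (X j) μ)
    (hsign : ∀ᵐ ω ∂μ, X 1 ω = 1 ∨ X 1 ω = -1)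
    (hindep : IndepFun (X 1) (fun ω (j : ℕ) => X (j + 2) ω) μ)
    (hsymm : (μ.map fun ω (j : ℕ) => X (j + 2) ω).IsNegInvariant) :
    IndepFun (X 1) (fun ω (j : ℕ) => X 1 ω * X (j + 2) ω) μ ∧
    IndepFun (X 1) (fun ω => cvSbarRV X ω) μ := by
  have hproducts : IndepFun (X 1) (fun ω (j : ℕ) => X 1 ω * X (j + 2) ω) μ :=
    indepFun_smul_of_isNegInvariant (hmeas 1 le_rfl) hsign
      (aemeasurable_pi_iff.mpr fun j => hmeas (j + 2) (by omega)) hindep hsymm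
  refine ⟨hproducts, ?_⟩
  have htransform := hproducts.comp measurable_id
    (measurable_cvTransform.comp measurable_cvPrependOne)
  refine htransform.congr .rfl ?_
  filter_upwards [hsign] with ω hω
  have hsq : X 1 ω * X 1 ω = 1 := by rcases hω with h | h <;> rw [h] <;> rfl
  rw [cvSbarRV_eq_cvTransform]
  exact cvTransform_cvPrependOne (x := fun j => X j ω) hsq

/-- If the signs `(X j)_{j ≥ 1}` are i.i.d. uniform on `{−1, 1}`, then `X 1` is
independent of the sequence of products `(X 1 · X (j+1))_{j ≥ 1}`.  Consequently,
`S 1 = X 1` is independent of the Csaki–Vincze transform `S̄ = T(S)`, since `S̄` is a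
measurable function of `(X 1 · X (j+1))_{j ≥ 1}`. -/
theorem cv_first_step_indep_transform {Ω : Type*} [MeasurableSpace Ω] (μ : Measure Ω)
    [IsProbabilityMeasure μ] (X : ℕ → Ω → ℤ)
    (hmeas : ∀ j, 1 ≤ j → Measurable (X j))
    (hval : ∀ j, 1 ≤ j → ∀ ω, X j ω = 1 ∨ X j ω = -1)
    (hindep : iIndepFun (fun j : ℕ => X (j + 1)) μ)
    (hlaw : ∀ j, 1 ≤ j →
      μ {ω | X j ω = 1} = 1 / 2 ∧ μ {ω | X j ω = -1} = 1 / 2) :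
    IndepFun (X 1) (fun ω (j : ℕ) => X 1 ω * X (j + 2) ω) μ ∧
    IndepFun (X 1) (fun ω => cvSbarRV X ω) μ := by
  have hmeas_tail (j : ℕ) : Measurable (X (j + 2)) := hmeas (j + 2) (by omega)
  have hsymm (j : ℕ) : (μ.map (X (j + 2))).IsNegInvariant := by
    obtain ⟨hpos, hneg⟩ := hlaw (j + 2) (by omega)
    exact isNegInvariant_map_of_sign (hmeas_tail j).aemeasurable
      (.of_forall (hval (j + 2) (by omega))) (hpos.trans hneg.symm)
  exact cv_first_step_indep_transform_general μ X (fun j hj => (hmeas j hj).aemeasurable)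
    (.of_forall (hval 1 le_rfl)) (indepFun_zero_tail (fun j => hmeas (j + 1) (by omega)) hindep)
    (isNegInvariant_map_pi hmeas_tail (hindep.precomp (add_left_injective 1)) hsymm)
end
end

section
/- For all integers p ≤ n, |Ψ_{p,n}(0)| = S⁺_{p,n}. -/
noncomputable section

/-- The star graph `G` with `N` half-lines `D_1, …, D_N` glued at the origin, realized by
canonical representatives in `Fin N × ℝ`: a point is a pair (ray index, distance to the
origin), the origin being represented on the ray of index `N - 1` (i.e. the ray `e_N`,
matching the convention `e(0) = e_N`). -/
def StarG (N : ℕ) : Type :=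
  {p : Fin N × ℝ // 0 ≤ p.2 ∧ (p.2 = 0 → (p.1 : ℕ) = N - 1)}

namespace StarG

variable {N : ℕ}

instance : DecidableEq (StarG N) :=
  inferInstanceAs (DecidableEq {p : Fin N × ℝ // 0 ≤ p.2 ∧ (p.2 = 0 → (p.1 : ℕ) = N - 1)})

instance : MeasurableSpace (StarG N) :=
  inferInstanceAs (MeasurableSpace {p : Fin N × ℝ // 0 ≤ p.2 ∧ (p.2 = 0 → (p.1 : ℕ) = N - 1)})

/-- The ray index `e(x)` of a point, with the convention `e(0) = e_N`. -/
def ray (x : StarG N) : Fin N := x.1.1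

/-- `|x| = d(x, 0)`, the distance from `x` to the origin. -/
def nrm (x : StarG N) : ℝ := x.1.2

/-- The distance on `G`: `d(h·e_i, h'·e_j) = |h − h'|` if `i = j` and `h + h'` if
`i ≠ j`. -/
def dist (x y : StarG N) : ℝ :=
  if x.ray = y.ray then |x.nrm - y.nrm| else x.nrm + y.nrm

/-- The origin `0` of `G` (requires `N ≥ 1`). -/
def origin (hN : 1 ≤ N) : StarG N :=
  ⟨(⟨N - 1, by omega⟩, 0), le_refl 0, fun _ => rfl⟩

/-- The point `h·e_i` (sent to the origin when `h ≤ 0`; in particular `0·e_i = 0` for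
every `i`).  For `x` on the ray `D_i` and `t ≥ −|x|`, the point `x + e(x)·t` is
`pt hN (ray x) (nrm x + t)`. -/
def pt (hN : 1 ≤ N) (i : Fin N) (h : ℝ) : StarG N :=
  if hh : 0 < h then ⟨(i, h), le_of_lt hh, fun h0 => absurd h0 (ne_of_gt hh)⟩
  else origin hN

/-- `x ∈ D_i` : the point `x` lies on the `i`-th half-line (the origin lies on all). -/
def memRay (x : StarG N) (i : Fin N) : Prop := x.ray = i ∨ x.nrm = 0

/-- `x ∈ G_ℕ` : the distance from `x` to the origin is a natural number. -/
def isLattice (x : StarG N) : Prop := ∃ m : ℕ, x.nrm = (m : ℝ)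

end StarG

/-- `min_{p ≤ h ≤ n} S h` (junk value `0` when `n < p`). -/
def walkMin (S : ℤ → ℤ) (p n : ℤ) : ℤ :=
  if h : p ≤ n then (Finset.Icc p n).inf' (Finset.nonempty_Icc.mpr h) S else 0

/-- `S⁺_{p,n} = S_{p,n} − min_{p ≤ h ≤ n} S_{p,h} = S n − min_{p ≤ h ≤ n} S h`. -/
def walkPlus (S : ℤ → ℤ) (p n : ℤ) : ℤ := S n - walkMin S p n

/-- The one-step map `Ψ_{p,p+1}` on `G_ℕ`:
`Ψ_{p,p+1}(x) = x + e(x)·S_{p,p+1}` for `x ≠ 0` and `Ψ_{p,p+1}(0) = S⁺_{p,p+1}·η_p`. -/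
def psiStep {N : ℕ} (hN : 1 ≤ N) (S : ℤ → ℤ) (η : ℤ → Fin N) (p : ℤ) (x : StarG N) :
    StarG N :=
  if x.nrm = 0 then StarG.pt hN (η p) ((walkPlus S p (p + 1) : ℤ) : ℝ)
  else StarG.pt hN x.ray (x.nrm + ((S (p + 1) - S p : ℤ) : ℝ))

/-- `k`-fold composition: `psiAux hN S η p k = Ψ_{p+k-1,p+k} ∘ ⋯ ∘ Ψ_{p,p+1}`. -/
def psiAux {N : ℕ} (hN : 1 ≤ N) (S : ℤ → ℤ) (η : ℤ → Fin N) (p : ℤ) :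
    ℕ → StarG N → StarG N
  | 0 => id
  | k + 1 => fun x => psiStep hN S η (p + k) (psiAux hN S η p k x)

/-- The discrete flow of mappings `Ψ_{p,n} = Ψ_{n−1,n} ∘ ⋯ ∘ Ψ_{p,p+1}` (the identity
when `n ≤ p`). -/
def psiFlow {N : ℕ} (hN : 1 ≤ N) (S : ℤ → ℤ) (η : ℤ → Fin N) (p n : ℤ) (x : StarG N) :
    StarG N :=
  psiAux hN S η p (n - p).toNat x

/-!
The reflected walk `S⁺_{p,·}` obeys the Lindley recursion `S⁺_{p,n+1} = max (S⁺_{p,n} + ΔS_n) 0`.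
Each step `Ψ_{n,n+1}` acts on the distance to the origin by the same rule: away from the origin
the distance is a positive integer, which a downward step of size at most `1` cannot make
negative, so the rule is just translation there; at the origin the rule is the definition of
`Ψ_{n,n+1}(0)`. Both processes start from `0`, so they agree.
-/

section Walk

variable (S : ℤ → ℤ) {p n : ℤ}

@[simp]
theorem walkMin_self (p : ℤ) : walkMin S p p = S p := by
  simp [walkMin]

theorem walkMin_succ (hpn : p ≤ n) :
    walkMin S p (n + 1) = min (walkMin S p n) (S (n + 1)) := by
  have hpn' : p ≤ n + 1 := by omega
  simp only [walkMin, dif_pos hpn, dif_pos hpn', ← Finset.insert_Icc_right_eq_Icc_add_one hpn',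
    Finset.inf'_insert (Finset.nonempty_Icc.mpr hpn)]
  exact min_comm _ _

@[simp]
theorem walkPlus_self (p : ℤ) : walkPlus S p p = 0 := by
  simp [walkPlus]

theorem walkPlus_succ (hpn : p ≤ n) :
    walkPlus S p (n + 1) = max (walkPlus S p n + (S (n + 1) - S n)) 0 := by
  rw [walkPlus, walkPlus, walkMin_succ S hpn]
  omega

end Walk

namespace StarG

variable {N : ℕ} (hN : 1 ≤ N)

theorem nrm_nonneg (x : StarG N) : 0 ≤ x.nrm := x.2.1

@[simp]
theorem nrm_origin : (origin hN).nrm = 0 := rfl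

theorem nrm_pt_of_nonneg (i : Fin N) {h : ℝ} (hh : 0 ≤ h) : (pt hN i h).nrm = h := by
  rcases hh.eq_or_lt with rfl | hpos
  · exact congrArg nrm (dif_neg (lt_irrefl 0))
  · exact congrArg nrm (dif_pos hpos)

end StarG

section Flow

variable {N : ℕ} (hN : 1 ≤ N) {S : ℤ → ℤ} (η : ℤ → Fin N) {p n : ℤ}

theorem nrm_psiStep (hS : S p - 1 ≤ S (p + 1)) {x : StarG N} {m : ℤ} (hx : x.nrm = m) :
    (psiStep hN S η p x).nrm = (max (m + (S (p + 1) - S p)) 0 : ℤ) := by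
  have hm : 0 ≤ m := by exact_mod_cast hx ▸ x.nrm_nonneg
  rw [psiStep, hx]
  rcases hm.eq_or_lt with rfl | hpos
  · have hW : walkPlus S p (p + 1) = max (0 + (S (p + 1) - S p)) 0 := by
      rw [walkPlus_succ S le_rfl, walkPlus_self]
    rw [if_pos Int.cast_zero, hW]
    exact StarG.nrm_pt_of_nonneg hN _ (by exact_mod_cast le_max_right _ _)
  · have hsum : 0 ≤ m + (S (p + 1) - S p) := by omega
    rw [if_neg (by exact_mod_cast hpos.ne'), ← Int.cast_add, max_eq_left hsum]
    exact StarG.nrm_pt_of_nonneg hN _ (by exact_mod_cast hsum)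

variable (S)

@[simp]
theorem psiFlow_self (p : ℤ) (x : StarG N) : psiFlow hN S η p p x = x := by
  simp [psiFlow, psiAux]

theorem psiFlow_succ (hpn : p ≤ n) (x : StarG N) :
    psiFlow hN S η p (n + 1) x = psiStep hN S η n (psiFlow hN S η p n x) := by
  have hsteps : (n + 1 - p).toNat = (n - p).toNat + 1 := by omega
  have htime : p + ((n - p).toNat : ℤ) = n := by omega
  rw [psiFlow, psiFlow, hsteps, psiAux, htime]

end Flow

theorem psiFlow_nrm_origin_general {N : ℕ} (hN : 1 ≤ N) {S : ℤ → ℤ}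
    (hS : ∀ n : ℤ, S n - 1 ≤ S (n + 1)) (η : ℤ → Fin N) {p n : ℤ} (hpn : p ≤ n) :
    (psiFlow hN S η p n (StarG.origin hN)).nrm = (walkPlus S p n : ℝ) := by
  induction n, hpn using Int.leInduction with
  | base => simp only [psiFlow_self, StarG.nrm_origin, walkPlus_self, Int.cast_zero]
  | succ n hpn ih => rw [psiFlow_succ hN S η hpn, nrm_psiStep hN η (hS n) ih, walkPlus_succ S hpn]

/-- For all integers `p ≤ n`, `|Ψ_{p,n}(0)| = S⁺_{p,n}`. -/
theorem psiFlow_nrm_origin (N : ℕ) (hN : 1 ≤ N) (S : ℤ → ℤ)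
    (hS : ∀ n : ℤ, S n - S (n - 1) = 1 ∨ S n - S (n - 1) = -1)
    (η : ℤ → Fin N) (p n : ℤ) (hpn : p ≤ n) :
    (psiFlow hN S η p n (StarG.origin hN)).nrm = ((walkPlus S p n : ℤ) : ℝ) :=
  psiFlow_nrm_origin_general hN (fun m => by grind [hS (m + 1)]) η hpn
end
end
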